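/- Fix a real number β < 1 and for n ≥ 2 define C_n = (1 + (n−1)(1−β))/n if n is odd and C_n = 1−β if n is even. Let f(z) = z + Σ_{n≥2} a_n zⁿ be analytic on the open unit disc 𝔻 with Re((1−z²)f′(z)) > β for all z ∈ 𝔻. Then for all integers n, m ≥ 2 such that n and m are not both even, and every real μ with μ ≥ max{nm/((n+m−1)(1−β)), nm/(n+m−1)}, one has |μ a_n a_m − a_{n+m−1}| ≤ μ C_n C_m − C_{n+m−1}. -/

import Mathlib

/-!
Put `A n = n * a n` and `b = 1 - β`. Then `((1 - z ^ 2) * f' - β) / b` is a Carathéodory function,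
and its coefficients `p k` satisfy `A (n + 2) = A n + b * p (n + 1)`. By Herglotz,
`p k = 2 * ∫ ζ ^ (-k) dν` for a probability measure `ν` on the circle. Reflecting a random variable
in its mean preserves its `L²` norm, so `‖p k * p l - p (k + l)‖ ≤ 2` by Cauchy–Schwarz.

One of the two indices, say `m`, is odd. Induction on `m` in steps of two bounds
`L * A n * A m - A (n + m - 1)` for `L = μ * (n + m - 1) / (n * m)`: the increment is `b` times
`L * A n * p l - p (n - 1 + l)`, which is split with the recursion for `A n`. The two lower bounds
on `μ` say exactly that `1 ≤ L` and `1 ≤ L * b`.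
-/

open Complex MeasureTheory Metric AddCircle Filter
open scoped Topology ComplexConjugate NNReal ENNReal InnerProductSpace

section Probability

variable {Ω : Type*} {mΩ : MeasurableSpace Ω} {μ : Measure Ω} [IsProbabilityMeasure μ]

lemma integral_norm_sq_two_smul_integral_sub {E : Type*} [NormedAddCommGroup E]
    [InnerProductSpace ℝ E] [CompleteSpace E] {Y : Ω → E} (hY : MemLp Y 2 μ) :
    ∫ ω, ‖(2 : ℝ) • (∫ x, Y x ∂μ) - Y ω‖ ^ 2 ∂μ = ∫ ω, ‖Y ω‖ ^ 2 ∂μ := by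
  set m := ∫ x, Y x ∂μ
  have hY_int : Integrable Y μ := hY.integrable one_le_two
  have hinner : Integrable (fun ω => 2 * ⟪(2 : ℝ) • m, Y ω⟫_ℝ) μ :=
    (hY_int.const_inner _).const_mul 2
  have hdiff : Integrable (fun ω => ‖(2 : ℝ) • m‖ ^ 2 - 2 * ⟪(2 : ℝ) • m, Y ω⟫_ℝ) μ :=
    (integrable_const _).sub hinner
  simp_rw [norm_sub_sq_real]
  rw [integral_add hdiff (hY.integrable_norm_pow two_ne_zero),
    integral_sub (integrable_const _) hinner, integral_const_mul, integral_inner hY_int]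
  have hcancel : ‖(2 : ℝ) • m‖ ^ 2 - 2 * ⟪(2 : ℝ) • m, m⟫_ℝ = 0 := by
    rw [norm_smul, real_inner_smul_left, real_inner_self_eq_norm_sq, Real.norm_two]
    ring
  simpa using hcancel

lemma norm_two_mul_integral_mul_integral_sub_integral_mul_le_one {X Y : Ω → ℂ}
    (hX : AEStronglyMeasurable X μ) (hY : AEStronglyMeasurable Y μ)
    (hX_le : ∀ᵐ ω ∂μ, ‖X ω‖ ≤ 1) (hY_le : ∀ᵐ ω ∂μ, ‖Y ω‖ ≤ 1) :
    ‖2 * (∫ ω, X ω ∂μ) * (∫ ω, Y ω ∂μ) - ∫ ω, X ω * Y ω ∂μ‖ ≤ 1 := by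
  set w := (2 : ℝ) • ∫ ω, Y ω ∂μ with hw
  have hX_int : Integrable X μ := .of_bound hX 1 hX_le
  have hY_mem : MemLp Y 2 μ := .of_bound hY 1 hY_le
  have hsq_int : Integrable (fun ω => ‖w - Y ω‖ ^ 2) μ :=
    ((memLp_const w).sub hY_mem).integrable_norm_pow'
  have hXY_int : Integrable (fun ω => X ω * Y ω) μ :=
    (hY_mem.integrable one_le_two).bdd_mul hX hX_le
  have hpointwise : ∀ᵐ ω ∂μ, ‖X ω * (w - Y ω)‖ ≤ (1 + ‖w - Y ω‖ ^ 2) / 2 := by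
    filter_upwards [hX_le] with ω hω
    rw [norm_mul]
    nlinarith [mul_le_of_le_one_left (norm_nonneg (w - Y ω)) hω, sq_nonneg (‖w - Y ω‖ - 1)]
  have hY_sq : ∫ ω, ‖Y ω‖ ^ 2 ∂μ ≤ 1 := by
    simpa using integral_mono_ae hY_mem.integrable_norm_pow' (integrable_const (1 : ℝ))
      (hY_le.mono fun ω hω => pow_le_one₀ (norm_nonneg _) hω)
  calc ‖2 * (∫ ω, X ω ∂μ) * (∫ ω, Y ω ∂μ) - ∫ ω, X ω * Y ω ∂μ‖
      = ‖∫ ω, X ω * (w - Y ω) ∂μ‖ := by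
        simp_rw [mul_sub]
        rw [integral_sub (hX_int.mul_const w) hXY_int, integral_mul_const, hw, real_smul]
        congr 2
        push_cast
        ring
    _ ≤ ∫ ω, (1 + ‖w - Y ω‖ ^ 2) / 2 ∂μ :=
        norm_integral_le_of_norm_le (((integrable_const 1).add hsq_int).div_const 2) hpointwise
    _ = (1 + ∫ ω, ‖Y ω‖ ^ 2 ∂μ) / 2 := by
        rw [integral_div, integral_add (integrable_const 1) hsq_int,
          integral_norm_sq_two_smul_integral_sub hY_mem]
        simp
    _ ≤ 1 := by linarith

lemma isProbabilityMeasure_withDensity_ofReal {ν : Measure Ω} {u : Ω → ℝ} (hu : Integrable u ν)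
    (hu_nonneg : 0 ≤ᵐ[ν] u) (hu_int : ∫ ω, u ω ∂ν = 1) :
    IsProbabilityMeasure (ν.withDensity fun ω => ENNReal.ofReal (u ω)) := by
  constructor
  rw [withDensity_apply _ .univ, Measure.restrict_univ,
    ← ofReal_integral_eq_lintegral_ofReal hu hu_nonneg, hu_int, ENNReal.ofReal_one]

end Probability

section Fourier

variable {T : ℝ} [Fact (0 < T)]

lemma hasSum_fourierCoeff {ι : Type*} {f : ι → C(AddCircle T, ℂ)} {g : C(AddCircle T, ℂ)}
    (h : HasSum f g) (n : ℤ) : HasSum (fun i => fourierCoeff (f i) n) (fourierCoeff g n) := by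
  have hcoeff (φ : C(AddCircle T, ℂ)) : fourierCoeff φ n =
      (innerSL ℂ (fourierBasis n) ∘L ContinuousMap.toLp 2 haarAddCircle ℂ) φ := by
    rw [← fourierCoeff_toLp, ← fourierBasis_repr, HilbertBasis.repr_apply_apply]
    rfl
  simp_rw [hcoeff]
  exact h.mapL _

lemma fourierCoeff_conj (g : AddCircle T → ℂ) (n : ℤ) :
    fourierCoeff (fun x => conj (g x)) n = conj (fourierCoeff g (-n)) := by
  simp_rw [fourierCoeff, ← integral_conj, smul_eq_mul, map_mul, neg_neg, fourier_neg]

lemma fourierCoeff_re (g : C(AddCircle T, ℂ)) (n : ℤ) :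
    fourierCoeff (fun x => ((g x).re : ℂ)) n
      = (fourierCoeff g n + conj (fourierCoeff g (-n))) / 2 := by
  have hg : Integrable g haarAddCircle :=
    g.continuous.integrable_of_hasCompactSupport (.of_compactSpace _)
  have hg' : Integrable (fun x => conj (g x)) haarAddCircle :=
    Continuous.integrable_of_hasCompactSupport (by fun_prop) (.of_compactSpace _)
  have hre : (fun x => ((g x).re : ℂ)) = (2⁻¹ : ℂ) • (⇑g + fun x => conj (g x)) := by
    ext x
    simp [re_eq_add_conj, div_eq_inv_mul]
  rw [hre, fourierCoeff.const_smul, fourierCoeff.add hg hg', Pi.add_apply, fourierCoeff_conj,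
    smul_eq_mul, inv_mul_eq_div]

variable {c : ℕ → ℂ} {g : C(AddCircle T, ℂ)}

lemma fourierCoeff_natCast_of_hasSum (h : HasSum (fun j : ℕ => c j • fourier (j : ℤ)) g) (k : ℕ) :
    fourierCoeff g k = c k := by
  refine (hasSum_fourierCoeff h k).unique ?_
  convert! hasSum_ite_eq k (c k) using 2 with j
  rw [ContinuousMap.coe_smul, fourierCoeff.const_smul, fourierCoeff_fourier]
  rcases eq_or_ne j k with rfl | hj
  · simp
  · simp [hj.symm, hj]

lemma fourierCoeff_eq_zero_of_hasSum (h : HasSum (fun j : ℕ => c j • fourier (j : ℤ)) g) {n : ℤ}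
    (hn : n < 0) : fourierCoeff g n = 0 := by
  refine (hasSum_fourierCoeff h n).unique ?_
  convert! hasSum_zero using 2 with j
  rw [ContinuousMap.coe_smul, fourierCoeff.const_smul, fourierCoeff_fourier,
    Pi.single_eq_of_ne (by omega), smul_zero]

lemma exists_isProbabilityMeasure_of_hasSum_fourier
    (h : HasSum (fun j : ℕ => c j • fourier (j : ℤ)) g) (hc : c 0 = 1)
    (hg : ∀ x, 0 ≤ (g x).re) :
    ∃ ν : Measure (AddCircle T), IsProbabilityMeasure ν ∧
      ∀ k : ℕ, k ≠ 0 → c k = 2 * ∫ x, fourier (-k) x ∂ν := by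
  have hu : Continuous fun x => (g x).re := by fun_prop
  have hmass : ∫ x, (g x).re ∂haarAddCircle = 1 := by
    have hcoeff : fourierCoeff g 0 = c 0 := mod_cast fourierCoeff_natCast_of_hasSum h 0
    have hre : fourierCoeff (fun x => ((g x).re : ℂ)) 0 = 1 := by
      rw [fourierCoeff_re, neg_zero, hcoeff, hc, map_one, add_self_div_two]
    simp only [fourierCoeff, neg_zero, fourier_zero, one_smul, integral_complex_ofReal] at hre
    exact_mod_cast hre
  refine ⟨haarAddCircle.withDensity fun x => ENNReal.ofReal (g x).re,
    isProbabilityMeasure_withDensity_ofReal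
      (hu.integrable_of_hasCompactSupport (.of_compactSpace _)) (.of_forall hg) hmass,
    fun k hk => ?_⟩
  have hmoment : fourierCoeff (fun x => ((g x).re : ℂ)) k = c k / 2 := by
    rw [fourierCoeff_re, fourierCoeff_natCast_of_hasSum h,
      fourierCoeff_eq_zero_of_hasSum h (by omega), map_zero, add_zero]
  rw [integral_withDensity_eq_integral_toReal_smul (by fun_prop)
    (.of_forall fun _ => ENNReal.ofReal_lt_top)]
  simp_rw [ENNReal.toReal_ofReal (hg _), real_smul, mul_comm ((g _).re : ℂ)]
  rw [← mul_div_cancel₀ (c k) two_ne_zero, ← hmoment]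
  rfl

end Fourier

lemma hasFPowerSeriesOnBall_ofScalars_of_hasSum {𝕜 : Type*} [RCLike 𝕜] {f : 𝕜 → 𝕜} {a : ℕ → 𝕜}
    {R : ℝ≥0∞} (hR : 0 < R) (hf : ∀ z ∈ eball (0 : 𝕜) R, HasSum (fun k => a k * z ^ k) (f z)) :
    HasFPowerSeriesOnBall f (.ofScalars 𝕜 a) 0 R where
  r_le := by
    refine ENNReal.le_of_forall_nnreal_lt fun r hr =>
      FormalMultilinearSeries.le_radius_of_summable_norm _ ?_
    have hr_mem : ((r : ℝ) : 𝕜) ∈ eball (0 : 𝕜) R := by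
      simpa [enorm_eq_nnnorm] using hr
    simpa [FormalMultilinearSeries.ofScalars_norm] using (hf _ hr_mem).summable.norm
  r_pos := hR
  hasSum {z} hz := by
    simpa [FormalMultilinearSeries.ofScalars_apply_eq, mul_comm] using hf z hz

lemma hasSum_deriv_of_hasSum {𝕜 : Type*} [RCLike 𝕜] {f : 𝕜 → 𝕜} {a : ℕ → 𝕜}
    {R : ℝ≥0∞} (hf : ∀ z ∈ eball (0 : 𝕜) R, HasSum (fun k => a k * z ^ k) (f z))
    {z : 𝕜} (hz : z ∈ eball 0 R) :
    HasSum (fun k : ℕ => ((k + 1 : ℕ) : 𝕜) * a (k + 1) * z ^ k) (deriv f z) := by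
  have hR : 0 < R := pos_of_mem_eball hz
  have hfderiv := ((hasFPowerSeriesOnBall_ofScalars_of_hasSum hR hf).fderiv.hasSum hz).mapL
    (ContinuousLinearMap.apply 𝕜 𝕜 1)
  rw [zero_add, ContinuousLinearMap.apply_apply, fderiv_apply_one_eq_deriv] at hfderiv
  refine hfderiv.congr_fun fun k => ?_
  rw [ContinuousLinearMap.apply_apply, FormalMultilinearSeries.apply_eq_pow_smul_coeff,
    smul_apply, FormalMultilinearSeries.derivSeries_coeff_one,
    FormalMultilinearSeries.coeff_ofScalars, smul_eq_mul, nsmul_eq_mul, mul_comm]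

lemma hasSum_one_sub_sq_mul {R : Type*} [CommRing R] [TopologicalSpace R] [IsTopologicalRing R]
    {A : ℕ → R} (hA : A 0 = 0) {z s : R} (h : HasSum (fun k => A (k + 1) * z ^ k) s) :
    HasSum (fun k => (A (k + 1) - A (k - 1)) * z ^ k) ((1 - z ^ 2) * s) := by
  have hshift : HasSum (fun k => A (k - 1) * z ^ k) (z ^ 2 * s) := by
    rw [← hasSum_nat_add_iff' 2]
    convert! h.mul_left (z ^ 2) using 1
    · ext k
      simp only [Nat.add_succ_sub_one]
      ring
    · simp [Finset.sum_range_succ, hA]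
  convert! h.sub hshift using 1
  · ext k
    ring
  · ring

/-- `P` is a Carathéodory function (holomorphic on the unit disc, `P 0 = 1`, nonnegative real part)
with Taylor coefficients `p`. Holomorphy is encoded by convergence of the power series to `P`. -/
structure HasCaratheodorySeries (P : ℂ → ℂ) (p : ℕ → ℂ) : Prop where
  hasSum : ∀ z ∈ ball (0 : ℂ) 1, HasSum (fun k => p k * z ^ k) (P z)
  coeff_zero : p 0 = 1
  re_nonneg : ∀ z ∈ ball (0 : ℂ) 1, 0 ≤ (P z).re

lemma hasCaratheodorySeries_of_le_re {G : ℂ → ℂ} {d : ℕ → ℂ} {β : ℝ} (hβ : β < 1)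
    (hG : ∀ z ∈ ball (0 : ℂ) 1, HasSum (fun k => d k * z ^ k) (G z)) (hd : d 0 = 1)
    (hre : ∀ z ∈ ball (0 : ℂ) 1, β ≤ (G z).re) :
    HasCaratheodorySeries (fun z => (G z - β) / (1 - β : ℝ))
      (fun k => if k = 0 then 1 else d k / (1 - β : ℝ)) where
  hasSum z hz := by
    have hβ' : (1 : ℂ) - β ≠ 0 := mod_cast (sub_pos.2 hβ).ne'
    convert! ((hG z hz).sub (hasSum_ite_eq 0 (β : ℂ))).div_const ((1 - β : ℝ) : ℂ) using 2 with k
    rcases eq_or_ne k 0 with rfl | hk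
    · simp [hd, hβ']
    · simp [hk, mul_div_right_comm]
  coeff_zero := if_pos rfl
  re_nonneg z hz := by
    rw [div_ofReal_re, sub_re, ofReal_re]
    exact div_nonneg (sub_nonneg.2 (hre z hz)) (sub_pos.2 hβ).le

namespace HasCaratheodorySeries

variable {P : ℂ → ℂ} {p : ℕ → ℂ}

lemma exists_probabilityMeasure_coeff_mul_pow_eq (h : HasCaratheodorySeries P p) {r : ℝ}
    (hr : r ∈ Set.Ico 0 1) :
    ∃ ν : ProbabilityMeasure UnitAddCircle,
      ∀ k : ℕ, k ≠ 0 →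
        p k * (r : ℂ) ^ k = 2 * ∫ x, fourier (-k) x ∂(ν : Measure UnitAddCircle) := by
  have hsummable : Summable fun j : ℕ => (p j * (r : ℂ) ^ j) • fourier (T := 1) (j : ℤ) := by
    refine .of_norm ?_
    simp_rw [norm_smul, fourier_norm, mul_one]
    exact (h.hasSum r (by simpa [abs_of_nonneg hr.1] using hr.2)).summable.norm
  obtain ⟨g, hg⟩ := hsummable
  have hmem (x : UnitAddCircle) : (r : ℂ) * toCircle x ∈ ball (0 : ℂ) 1 := by
    rw [mem_ball_zero_iff, norm_mul, Circle.norm_coe, mul_one, Complex.norm_of_nonneg hr.1]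
    exact hr.2
  have hg_apply (x : UnitAddCircle) : g x = P (r * toCircle x) := by
    refine ((ContinuousMap.evalCLM ℂ x).hasSum hg).unique
      ((h.hasSum _ (hmem x)).congr_fun fun j => ?_)
    simp [toCircle_nsmul, mul_pow, mul_assoc]
  obtain ⟨ν, hν, hmoment⟩ := exists_isProbabilityMeasure_of_hasSum_fourier hg
    (by simp [h.coeff_zero]) (fun x => hg_apply x ▸ h.re_nonneg _ (hmem x))
  exact ⟨⟨ν, hν⟩, hmoment⟩

theorem exists_probabilityMeasure_coeff_eq (h : HasCaratheodorySeries P p) :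
    ∃ ν : ProbabilityMeasure UnitAddCircle,
      ∀ k : ℕ, k ≠ 0 → p k = 2 * ∫ x, fourier (-k) x ∂(ν : Measure UnitAddCircle) := by
  choose! ν hν using fun (r : ℝ) (hr : r ∈ Set.Ico 0 1) =>
    h.exists_probabilityMeasure_coeff_mul_pow_eq hr
  -- The space of probability measures on the circle is compact, so `ν r` clusters as `r → 1⁻`.
  obtain ⟨ν₁, -, hcluster⟩ := isCompact_univ (X := ProbabilityMeasure UnitAddCircle)
    (f := map ν (𝓝[<] 1)) (by simp)
  obtain ⟨U, hU, hUlim⟩ := mapClusterPt_iff_ultrafilter.1 hcluster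
  refine ⟨ν₁, fun k hk => ?_⟩
  have hmoment_lim : Tendsto (fun r => 2 * ∫ x, fourier (-k : ℤ) x ∂(ν r : Measure UnitAddCircle)) U
      (𝓝 (2 * ∫ x, fourier (-k : ℤ) x ∂(ν₁ : Measure UnitAddCircle))) :=
    ((ProbabilityMeasure.tendsto_iff_forall_integral_rclike_tendsto ℂ).1 hUlim
      (.mkOfCompact (fourier (-k)))).const_mul 2
  have hcoeff_lim : Tendsto (fun r : ℝ => p k * (r : ℂ) ^ k) U (𝓝 (p k)) := by
    have hcont : Continuous fun r : ℝ => p k * (r : ℂ) ^ k := by fun_prop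
    simpa using (hcont.tendsto 1).mono_left (hU.trans nhdsWithin_le_nhds)
  refine tendsto_nhds_unique_of_eventuallyEq hcoeff_lim hmoment_lim ?_
  filter_upwards [hU (Ico_mem_nhdsLT one_pos)] with r hr using hν r hr k hk

lemma norm_coeff_le_two (h : HasCaratheodorySeries P p) {k : ℕ} (hk : k ≠ 0) : ‖p k‖ ≤ 2 := by
  obtain ⟨ν, hν⟩ := h.exists_probabilityMeasure_coeff_eq
  have hle : ‖∫ x, fourier (-k : ℤ) x ∂(ν : Measure UnitAddCircle)‖ ≤ 1 := by
    simpa using norm_integral_le_of_norm_le_const (μ := (ν : Measure UnitAddCircle)) (C := 1)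
      (.of_forall fun x => (Circle.norm_coe _).le)
  rw [hν k hk, norm_mul, RCLike.norm_two]
  linarith

lemma norm_coeff_mul_coeff_sub_coeff_add_le_two (h : HasCaratheodorySeries P p) {k l : ℕ}
    (hk : k ≠ 0) (hl : l ≠ 0) : ‖p k * p l - p (k + l)‖ ≤ 2 := by
  obtain ⟨ν, hν⟩ := h.exists_probabilityMeasure_coeff_eq
  have hle := norm_two_mul_integral_mul_integral_sub_integral_mul_le_one
    (μ := (ν : Measure UnitAddCircle)) (X := fourier (-k)) (Y := fourier (-l))
    (map_continuous _).aestronglyMeasurable (map_continuous _).aestronglyMeasurable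
    (.of_forall fun _ => (Circle.norm_coe _).le) (.of_forall fun _ => (Circle.norm_coe _).le)
  have hsplit : ∫ x, fourier (-k : ℤ) x * fourier (-l : ℤ) x ∂(ν : Measure UnitAddCircle)
      = ∫ x, fourier (-(k + l : ℕ) : ℤ) x ∂(ν : Measure UnitAddCircle) := by
    simp_rw [← fourier_add]
    push_cast
    simp_rw [neg_add]
  rw [hsplit] at hle
  have hfactor (u v w : ℂ) : 2 * u * (2 * v) - 2 * w = 2 * (2 * u * v - w) := by ring
  rw [hν k hk, hν l hl, hν (k + l) (by omega), hfactor, norm_mul, RCLike.norm_two]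
  linarith

end HasCaratheodorySeries

section Recursion

/-- The sharp bound for `n * ‖a n‖` when `f = ∑ a n z ^ n` satisfies
`β < re ((1 - z ^ 2) * deriv f z)` and `b = 1 - β`; thus `C n = extremalCoeff (1 - β) n / n` in the
notation of the main theorem. -/
noncomputable def extremalCoeff (b : ℝ) (n : ℕ) : ℝ :=
  if Odd n then 1 + (n - 1) * b else n * b

lemma extremalCoeff_zero (b : ℝ) : extremalCoeff b 0 = 0 := by simp [extremalCoeff]

lemma extremalCoeff_one (b : ℝ) : extremalCoeff b 1 = 1 := by simp [extremalCoeff]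

lemma extremalCoeff_add_two (b : ℝ) (n : ℕ) :
    extremalCoeff b (n + 2) = extremalCoeff b n + 2 * b := by
  have hparity : Odd (n + 2) ↔ Odd n := by simp [parity_simps]
  simp only [extremalCoeff, hparity]
  split_ifs <;> push_cast <;> ring

lemma extremalCoeff_div_self (b : ℝ) {n : ℕ} (hn : n ≠ 0) :
    extremalCoeff b n / n = if Odd n then (1 + ((n : ℝ) - 1) * b) / n else b := by
  rw [extremalCoeff]
  split_ifs
  · rfl
  · field_simp

variable {b : ℝ} {A p : ℕ → ℂ}

lemma norm_le_extremalCoeff (hb : 0 ≤ b) (hA0 : A 0 = 0) (hA1 : A 1 = 1)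
    (hA : ∀ j, A (j + 2) = A j + b * p (j + 1)) (hp : ∀ k ≠ 0, ‖p k‖ ≤ 2) (n : ℕ) :
    ‖A n‖ ≤ extremalCoeff b n := by
  induction n using Nat.twoStepInduction with
  | zero => simp [hA0, extremalCoeff_zero]
  | one => simp [hA1, extremalCoeff_one]
  | more n ih _ =>
    calc ‖A (n + 2)‖ ≤ ‖A n‖ + b * ‖p (n + 1)‖ := by
          rw [hA]
          exact (norm_add_le _ _).trans_eq (by rw [norm_mul, Complex.norm_of_nonneg hb])
      _ ≤ extremalCoeff b n + b * 2 := by gcongr; exact hp _ n.succ_ne_zero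
      _ = extremalCoeff b (n + 2) := by rw [extremalCoeff_add_two, mul_comm]

variable {L : ℝ}

lemma norm_mul_mul_coeff_sub_coeff_le (hb : 0 ≤ b) (hA0 : A 0 = 0) (hA1 : A 1 = 1)
    (hA : ∀ j, A (j + 2) = A j + b * p (j + 1)) (hp : ∀ k ≠ 0, ‖p k‖ ≤ 2)
    (hpp : ∀ k ≠ 0, ∀ l ≠ 0, ‖p k * p l - p (k + l)‖ ≤ 2) (hL : 0 ≤ L) (hLb : 1 ≤ L * b)
    (n : ℕ) {l : ℕ} (hl : l ≠ 0) :
    ‖L * A (n + 2) * p l - p (n + 1 + l)‖ ≤ 2 * (L * extremalCoeff b (n + 2) - 1) := by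
  have hsplit : L * A (n + 2) * p l - p (n + 1 + l)
      = L * (A n * p l) + ((L * b - 1 : ℝ) * (p (n + 1) * p l)
        + (p (n + 1) * p l - p (n + 1 + l))) := by
    rw [hA]
    push_cast
    ring
  have hA_le : ‖A n‖ ≤ extremalCoeff b n := norm_le_extremalCoeff hb hA0 hA1 hA hp n
  calc ‖L * A (n + 2) * p l - p (n + 1 + l)‖
      ≤ L * (‖A n‖ * ‖p l‖) + ((L * b - 1) * (‖p (n + 1)‖ * ‖p l‖)
        + ‖p (n + 1) * p l - p (n + 1 + l)‖) := by
        rw [hsplit]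
        refine norm_add_le_of_le ?_ (norm_add_le_of_le ?_ le_rfl)
        · rw [norm_mul, norm_mul, Complex.norm_of_nonneg hL]
        · rw [norm_mul, norm_mul, Complex.norm_of_nonneg (sub_nonneg.2 hLb)]
    _ ≤ L * (extremalCoeff b n * 2) + ((L * b - 1) * (2 * 2) + 2) := by
        have hextremal_nonneg : 0 ≤ extremalCoeff b n := (norm_nonneg _).trans hA_le
        gcongr
        exacts [hp l hl, hp _ n.succ_ne_zero, hp l hl, hpp _ n.succ_ne_zero l hl]
    _ = 2 * (L * extremalCoeff b (n + 2) - 1) := by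
        rw [extremalCoeff_add_two]
        ring

lemma norm_mul_mul_sub_le_extremalCoeff (hb : 0 ≤ b) (hA0 : A 0 = 0) (hA1 : A 1 = 1)
    (hA : ∀ j, A (j + 2) = A j + b * p (j + 1)) (hp : ∀ k ≠ 0, ‖p k‖ ≤ 2)
    (hpp : ∀ k ≠ 0, ∀ l ≠ 0, ‖p k * p l - p (k + l)‖ ≤ 2) (hL : 1 ≤ L) (hLb : 1 ≤ L * b)
    (n q : ℕ) :
    ‖L * A (n + 2) * A (2 * q + 1) - A (n + 2 + 2 * q)‖
      ≤ L * extremalCoeff b (n + 2) * extremalCoeff b (2 * q + 1)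
        - extremalCoeff b (n + 2 + 2 * q) := by
  induction q with
  | zero =>
    have hfactor : L * A (n + 2) * 1 - A (n + 2) = (L - 1 : ℝ) * A (n + 2) := by
      push_cast
      ring
    have hle := mul_le_mul_of_nonneg_left (norm_le_extremalCoeff hb hA0 hA1 hA hp (n + 2))
      (sub_nonneg.2 hL)
    simp only [mul_zero, zero_add, add_zero, hA1, extremalCoeff_one]
    rw [hfactor, norm_mul, Complex.norm_of_nonneg (sub_nonneg.2 hL)]
    linarith
  | succ q ih =>
    have hstep := norm_mul_mul_coeff_sub_coeff_le hb hA0 hA1 hA hp hpp (zero_le_one.trans hL) hLb n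
      (l := 2 * q + 2) (by omega)
    have hsplit : L * A (n + 2) * A (2 * q + 3) - A (n + 2 + 2 * q + 2)
        = (L * A (n + 2) * A (2 * q + 1) - A (n + 2 + 2 * q))
          + b * (L * A (n + 2) * p (2 * q + 2) - p (n + 1 + (2 * q + 2))) := by
      rw [hA (2 * q + 1), hA (n + 2 + 2 * q), show n + 2 + 2 * q + 1 = n + 1 + (2 * q + 2) by ring]
      ring
    calc ‖L * A (n + 2) * A (2 * q + 3) - A (n + 2 + 2 * q + 2)‖
        ≤ (L * extremalCoeff b (n + 2) * extremalCoeff b (2 * q + 1)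
            - extremalCoeff b (n + 2 + 2 * q))
          + b * (2 * (L * extremalCoeff b (n + 2) - 1)) := by
          rw [hsplit]
          refine norm_add_le_of_le ih ?_
          rw [norm_mul, Complex.norm_of_nonneg hb]
          gcongr
      _ = L * extremalCoeff b (n + 2) * extremalCoeff b (2 * q + 3)
            - extremalCoeff b (n + 2 + 2 * q + 2) := by
          rw [extremalCoeff_add_two b (2 * q + 1), extremalCoeff_add_two b (n + 2 + 2 * q)]
          ring

end Recursion

lemma norm_mul_mul_sub_le_of_natCast_mul {a : ℕ → ℂ} {B : ℕ → ℝ} {μ : ℝ} {n m N : ℕ}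
    (hn : n ≠ 0) (hm : m ≠ 0) (hN : N ≠ 0)
    (h : ‖(μ * N / (n * m) : ℝ) * (n * a n) * (m * a m) - N * a N‖
      ≤ μ * N / (n * m) * B n * B m - B N) :
    ‖μ * a n * a m - a N‖ ≤ μ * (B n / n) * (B m / m) - B N / N := by
  have hN_pos : (0 : ℝ) < N := by positivity
  have hscale : (μ * N / (n * m) : ℝ) * (n * a n) * (m * a m) - N * a N
      = N * (μ * a n * a m - a N) := by
    push_cast
    field_simp
  refine le_of_mul_le_mul_left ?_ hN_pos
  calc N * ‖μ * a n * a m - a N‖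
      = ‖(μ * N / (n * m) : ℝ) * (n * a n) * (m * a m) - N * a N‖ := by
        rw [hscale, norm_mul, Complex.norm_natCast]
    _ ≤ μ * N / (n * m) * B n * B m - B N := h
    _ = N * (μ * (B n / n) * (B m / m) - B N / N) := by field_simp

section Zalcman

variable {β : ℝ} {f : ℂ → ℂ} {a : ℕ → ℂ}

lemma exists_hasCaratheodorySeries (hβ : β < 1) (ha1 : a 1 = 1)
    (hf : ∀ z ∈ ball (0 : ℂ) 1, HasSum (fun k => a k * z ^ k) (f z))
    (hre : ∀ z ∈ ball (0 : ℂ) 1, β ≤ ((1 - z ^ 2) * deriv f z).re) :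
    ∃ P p, HasCaratheodorySeries P p ∧
      ∀ j : ℕ, ((j + 2 : ℕ) : ℂ) * a (j + 2) = j * a j + (1 - β : ℝ) * p (j + 1) := by
  have heball : eball (0 : ℂ) 1 = ball 0 1 := by simpa using eball_ofReal (x := (0 : ℂ)) (ε := 1)
  have hseries (z : ℂ) (hz : z ∈ ball (0 : ℂ) 1) :
      HasSum (fun k : ℕ => (((k + 1 : ℕ) : ℂ) * a (k + 1) - ((k - 1 : ℕ) : ℂ) * a (k - 1)) * z ^ k)
        ((1 - z ^ 2) * deriv f z) :=
    hasSum_one_sub_sq_mul (A := fun k => k * a k) (by simp)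
      (hasSum_deriv_of_hasSum (heball ▸ hf) (heball ▸ hz))
  refine ⟨_, _, hasCaratheodorySeries_of_le_re hβ hseries (by simp [ha1]) hre, fun j => ?_⟩
  have hβ' : ((1 - β : ℝ) : ℂ) ≠ 0 := mod_cast (sub_pos.2 hβ).ne'
  rw [if_neg j.succ_ne_zero, mul_div_cancel₀ _ hβ', Nat.add_sub_cancel]
  ring

lemma norm_mul_mul_sub_le_of_odd (hβ : β < 1) (ha1 : a 1 = 1)
    (hf : ∀ z ∈ ball (0 : ℂ) 1, HasSum (fun k => a k * z ^ k) (f z))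
    (hre : ∀ z ∈ ball (0 : ℂ) 1, β ≤ ((1 - z ^ 2) * deriv f z).re)
    {n m : ℕ} (hn : 2 ≤ n) (hm : Odd m) {μ : ℝ}
    (hμβ : (n : ℝ) * m / (((n : ℝ) + m - 1) * (1 - β)) ≤ μ)
    (hμ : (n : ℝ) * m / ((n : ℝ) + m - 1) ≤ μ) :
    ‖μ * a n * a m - a (n + m - 1)‖ ≤ μ * (extremalCoeff (1 - β) n / n)
      * (extremalCoeff (1 - β) m / m)
      - extremalCoeff (1 - β) (n + m - 1) / (n + m - 1 : ℕ) := by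
  have hm_pos : 0 < m := hm.pos
  have hb : 0 < 1 - β := sub_pos.2 hβ
  have hN : ((n + m - 1 : ℕ) : ℝ) = n + m - 1 := by
    rw [Nat.cast_pred (by omega), Nat.cast_add]
  have hN_pos : (0 : ℝ) < (n + m - 1 : ℕ) := Nat.cast_pos.2 (by omega)
  rw [← hN] at hμβ hμ
  have hL : 1 ≤ μ * (n + m - 1 : ℕ) / (n * m) := by
    rwa [one_le_div (by positivity), ← div_le_iff₀ hN_pos]
  have hLb : 1 ≤ μ * (n + m - 1 : ℕ) / (n * m) * (1 - β) := by
    rwa [div_mul_eq_mul_div, one_le_div (by positivity), mul_assoc, ← div_le_iff₀ (by positivity)]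
  obtain ⟨P, p, hP, hrec⟩ := exists_hasCaratheodorySeries hβ ha1 hf hre
  refine norm_mul_mul_sub_le_of_natCast_mul (by omega) (by omega) (by omega) ?_
  obtain ⟨q, rfl⟩ := hm
  obtain ⟨l, rfl⟩ := Nat.exists_eq_add_of_le' hn
  exact norm_mul_mul_sub_le_extremalCoeff (A := fun k => k * a k) hb.le (by simp) (by simp [ha1])
    hrec (fun k hk => hP.norm_coeff_le_two hk)
    (fun k hk l hl => hP.norm_coeff_mul_coeff_sub_coeff_add_le_two hk hl) hL hLb l q

end Zalcman

theorem zalcman_F2_beta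
    (β : ℝ) (hβ : β < 1) (C : ℕ → ℝ)
    (hC : ∀ n, 2 ≤ n →
      C n = if Odd n then (1 + ((n : ℝ) - 1) * (1 - β)) / n else 1 - β)
    (f : ℂ → ℂ) (a : ℕ → ℂ)
    (ha0 : a 0 = 0) (ha1 : a 1 = 1)
    (hf : ∀ z ∈ Metric.ball (0 : ℂ) 1, HasSum (fun k => a k * z ^ k) (f z))
    (hre : ∀ z ∈ Metric.ball (0 : ℂ) 1, β < ((1 - z ^ 2) * deriv f z).re)
    (n m : ℕ) (hn : 2 ≤ n) (hm : 2 ≤ m) (hpar : ¬(Even n ∧ Even m)) (μ : ℝ)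
    (hμ : max ((n : ℝ) * m / (((n : ℝ) + m - 1) * (1 - β)))
            ((n : ℝ) * m / ((n : ℝ) + m - 1)) ≤ μ) :
    ‖(μ : ℂ) * a n * a m - a (n + m - 1)‖ ≤ μ * C n * C m - C (n + m - 1) := by
  have hC_eq {k : ℕ} (hk : 2 ≤ k) : C k = extremalCoeff (1 - β) k / k := by
    rw [hC k hk, extremalCoeff_div_self _ (by omega)]
  wlog hm_odd : Odd m generalizing n m
  · have hn_odd : Odd n := by grind
    have hswap := this m n hm hn (by grind) (by rwa [mul_comm (m : ℝ), add_comm (m : ℝ)]) hn_odd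
    rwa [add_comm m n, mul_right_comm, mul_right_comm μ] at hswap
  rw [hC_eq hn, hC_eq hm, hC_eq (by omega : 2 ≤ n + m - 1)]
  exact norm_mul_mul_sub_le_of_odd hβ ha1 hf (fun z hz => (hre z hz).le) hn hm_odd
    (le_of_max_le_left hμ) (le_of_max_le_right hμ)
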